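/- A vector v ∈ V₈ is stable for the action of G₈ = SL₂(L)×Lˣ×Lˣ×Lˣ if and only if Δ₈(v) ≠ 0 in L. -/

import Mathlib

/- Zariski-closedness of a subset of affine n-space over L: it is the common zero locus
of a set of polynomial functions (with respect to the fixed coordinates). -/
def IsZariskiClosed {n : ℕ} {L : Type*} [CommRing L] (s : Set (Fin n → L)) : Prop :=
  ∃ P : Set (MvPolynomial (Fin n) L), s = {x | ∀ p ∈ P, MvPolynomial.eval x p = 0}

/- The element (F₁, F₂, f, g) of V₈ = P₂ ⊕ P₁ ⊕ L ⊕ L with coordinates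
c = (a,b,c,d,e,f,g): F₁ = aX² + bXY + cY², F₂ = dX + eY (X = X 0, Y = X 1). -/
noncomputable def toV8 {L : Type*} [CommRing L] (c : Fin 7 → L) :
    MvPolynomial (Fin 2) L × MvPolynomial (Fin 2) L × L × L :=
  (MvPolynomial.C (c 0) * MvPolynomial.X 0 ^ 2
      + MvPolynomial.C (c 1) * MvPolynomial.X 0 * MvPolynomial.X 1
      + MvPolynomial.C (c 2) * MvPolynomial.X 1 ^ 2,
   MvPolynomial.C (c 3) * MvPolynomial.X 0 + MvPolynomial.C (c 4) * MvPolynomial.X 1,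
   c 5, c 6)

/- Linear substitution of the variables (X,Y) by a matrix A ∈ SL₂(L). -/
noncomputable def sub8 {L : Type*} [CommRing L] (A : Matrix.SpecialLinearGroup (Fin 2) L)
    (v : MvPolynomial (Fin 2) L) : MvPolynomial (Fin 2) L :=
  MvPolynomial.aeval (fun i => ∑ j : Fin 2, MvPolynomial.C (A.1 i j) * MvPolynomial.X j) v

/- The action of G₈ = SL₂(L) × Lˣ × Lˣ × Lˣ on V₈:
(A, t₁, t₂, t₃)·(F₁, F₂, f, g) = (t₂⁻¹·(F₁∘A), t₃⁻¹·(F₂∘A), t₁⁻¹·f, t₁²t₂³t₃²·g). -/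
noncomputable def act8 {L : Type*} [Field L]
    (g : Matrix.SpecialLinearGroup (Fin 2) L × Lˣ × Lˣ × Lˣ)
    (v : MvPolynomial (Fin 2) L × MvPolynomial (Fin 2) L × L × L) :
    MvPolynomial (Fin 2) L × MvPolynomial (Fin 2) L × L × L :=
  (((g.2.2.1 : L))⁻¹ • sub8 g.1 v.1,
   ((g.2.2.2 : L))⁻¹ • sub8 g.1 v.2.1,
   ((g.2.1 : L))⁻¹ * v.2.2.1,
   (g.2.1 : L) ^ 2 * (g.2.2.1 : L) ^ 3 * (g.2.2.2 : L) ^ 2 * v.2.2.2)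

/- Δ₈(v) = (f²g(b²−4ac)(cd²−bde+ae²))² = f⁴g²·disc(F₁)·disc(F₁F₂). -/
def Delta8 {L : Type*} [CommRing L] (c : Fin 7 → L) : L :=
  ((c 5) ^ 2 * c 6 * ((c 1) ^ 2 - 4 * c 0 * c 2)
      * (c 2 * (c 3) ^ 2 - c 1 * c 3 * c 4 + c 0 * (c 4) ^ 2)) ^ 2

/- Stability: the orbit of v (in the coordinate space of V₈ with respect to its
monomial basis) is Zariski-closed and the stabilizer of v in G₈ is finite. -/
def Stable8 {L : Type*} [Field L] (c : Fin 7 → L) : Prop :=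
  IsZariskiClosed {c' : Fin 7 → L |
    ∃ g : Matrix.SpecialLinearGroup (Fin 2) L × Lˣ × Lˣ × Lˣ,
      toV8 c' = act8 g (toV8 c)} ∧
  {g : Matrix.SpecialLinearGroup (Fin 2) L × Lˣ × Lˣ × Lˣ |
      act8 g (toV8 c) = toV8 c}.Finite

/-!
Transporting the action to coordinates turns `V₈` into a right `G₈`-module on which the
discriminant of `F₁` and the resultant of `F₁` and `F₂` are semi-invariants, so that `Δ₈` is the
square of an invariant `I`.

A stable vector has a negative weight under every nontrivial one-parameter subgroup: otherwise its
limit lies in the closed orbit and is fixed by the whole one-parameter subgroup, although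
stabilizers along an orbit are conjugate, hence finite. If a factor of `Δ₈` vanishes, such a
subgroup without negative weights exists after moving a root of `F₁` or of `F₂` to `(0, 1)`.

Conversely, if `I(v) ≠ 0` then `v` can be moved to `(XY, X + Y, 1, -I(v))`. So the orbit of `v` is
the level set of `I` through `v`, which is closed, and its stabilizer is finite because that of the
normal form is.
-/

open scoped RightActions
open MulAction

section ZariskiClosed

theorem isZariskiClosed_setOf_eval_eq {n : ℕ} {R : Type*} [CommRing R]
    (p : MvPolynomial (Fin n) R) (y : R) : IsZariskiClosed {x | MvPolynomial.eval x p = y} :=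
  ⟨{p - MvPolynomial.C y}, by simp [sub_eq_zero]⟩

theorem IsZariskiClosed.eval_mem_of_infinite {n : ℕ} {R : Type*} [CommRing R] [IsDomain R]
    {S : Set (Fin n → R)} (hS : IsZariskiClosed S) (γ : Fin n → Polynomial R)
    (hγ : {s | (fun i => (γ i).eval s) ∈ S}.Infinite) (s : R) :
    (fun i => (γ i).eval s) ∈ S := by
  obtain ⟨P, rfl⟩ := hS
  intro p hp
  have eval_comp (s : R) :
      (MvPolynomial.aeval γ p).eval s = MvPolynomial.eval (fun i => (γ i).eval s) p := by
    simpa using MvPolynomial.comp_aeval_apply (f := γ) (Polynomial.aeval s) p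
  have comp_eq_zero : MvPolynomial.aeval γ p = 0 :=
    Polynomial.eq_zero_of_infinite_isRoot _
      (hγ.mono fun s (hs : ∀ p ∈ P, MvPolynomial.eval (fun i => (γ i).eval s) p = 0) =>
        (eval_comp s).trans (hs p hp))
  rw [← eval_comp, comp_eq_zero, Polynomial.eval_zero]

end ZariskiClosed

section Stability

/-- Stability of `x` for an arbitrary group acting on affine space: a Zariski-closed orbit and a
finite stabilizer. The action is not required to be linear or algebraic. -/
def IsZariskiStable {n : ℕ} {R : Type*} [CommRing R] (G : Type*) [Group G]
    [MulAction G (Fin n → R)] (x : Fin n → R) : Prop :=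
  IsZariskiClosed (orbit G x) ∧ Finite (stabilizer G x)

theorem IsZariskiStable.of_mem_orbit {n : ℕ} {R : Type*} [CommRing R] {G : Type*} [Group G]
    [MulAction G (Fin n → R)] {x y : Fin n → R} (hx : IsZariskiStable G x)
    (hy : y ∈ orbit G x) : IsZariskiStable G y := by
  obtain ⟨hclosed, hfinite⟩ := hx
  exact ⟨orbit_eq_iff.mpr hy ▸ hclosed,
    .of_equiv _ (stabilizerEquivStabilizerOfOrbitRel (orbitRel_apply.mpr hy)).symm.toEquiv⟩

variable {L : Type*} [Field L] [Infinite L]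

theorem exists_units_zpow_ne_one {k : ℤ} (hk : k ≠ 0) : ∃ s : Lˣ, s ^ k ≠ 1 := by
  by_contra! h
  refine (Set.finite_singleton (0 : L)).infinite_compl
    ((Polynomial.nthRootsFinset k.natAbs (1 : L)).finite_toSet.subset fun s hs => ?_)
  have pow_eq_one := congrArg Units.val (pow_natAbs_eq_one.mpr (h (Units.mk0 s hs)))
  exact (Polynomial.mem_nthRootsFinset (Int.natAbs_pos.mpr hk) 1).mpr pow_eq_one

theorem infinite_range_units_zpow {k : ℤ} (hk : k ≠ 0) :
    (Set.range fun s : Lˣ => s ^ k).Infinite := by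
  intro hfinite
  let powers : Subgroup Lˣ := (zpowGroupHom k).range
  have : Finite powers := hfinite
  obtain ⟨s, hs⟩ := exists_units_zpow_ne_one (L := L) (k := k * Nat.card powers)
    (mul_ne_zero hk (mod_cast Nat.card_pos.ne'))
  rw [zpow_mul, zpow_natCast] at hs
  exact hs (congrArg Subtype.val (pow_card_eq_one' (x := (⟨s ^ k, s, rfl⟩ : powers))))

theorem IsZariskiStable.exists_weight_neg {n : ℕ} {G : Type*} [Group G]
    [MulAction G (Fin n → L)] {x : Fin n → L} (hx : IsZariskiStable G x) (lam : Lˣ → G)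
    {w : Fin n → ℤ} (hw : w ≠ 0)
    (hlam : ∀ (s : Lˣ) (y : Fin n → L) i, (lam s • y) i = (s : L) ^ w i * y i) :
    ∃ i, x i ≠ 0 ∧ w i < 0 := by
  by_contra! nonneg
  have zpow_weight {i} (hi : x i ≠ 0) (s : Lˣ) : (s : L) ^ w i = (s : L) ^ (w i).toNat := by
    rw [← zpow_natCast, Int.toNat_of_nonneg (nonneg i hi)]
  let γ : Fin n → Polynomial L := fun i => Polynomial.C (x i) * Polynomial.X ^ (w i).toNat
  let x₀ : Fin n → L := fun i => (γ i).eval 0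
  have curve_mem (s : Lˣ) : (fun i => (γ i).eval (s : L)) ∈ orbit G x := by
    refine ⟨lam s, funext fun i => (hlam s x i).trans ?_⟩
    by_cases hi : x i = 0
    · simp [γ, hi]
    · simpa [γ, zpow_weight hi] using mul_comm _ _
  have limit_mem : x₀ ∈ orbit G x := by
    refine hx.1.eval_mem_of_infinite γ ?_ 0
    exact (Set.finite_singleton (0 : L)).infinite_compl.mono
      fun s hs => curve_mem (Units.mk0 s hs)
  have limit_fixed (s : Lˣ) : lam s ∈ stabilizer G x₀ := by
    refine mem_stabilizer_iff.mpr (funext fun i => ?_)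
    by_cases hi : x i = 0
    · simp [hlam, x₀, γ, hi]
    · rw [hlam, zpow_weight hi]
      rcases (w i).toNat.eq_zero_or_pos with h | h
      · simp [h]
      · simp [x₀, γ, h.ne']
  have : Finite (stabilizer G x₀) := (hx.of_mem_orbit limit_mem).2
  obtain ⟨i, hi⟩ := Function.ne_iff.mp hw
  let character : G → L := fun g => (g • (1 : Fin n → L)) i
  refine infinite_range_units_zpow (L := L) hi
    (.of_finite_image ?_ Units.val_injective.injOn)
  refine ((stabilizer G x₀ : Set G).toFinite.image character).subset ?_
  rintro _ ⟨_, ⟨s, rfl⟩, rfl⟩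
  exact ⟨lam s, limit_fixed s, by simp [character, hlam]⟩

end Stability

section QuadraticEquations

/-- A field in which every quadratic polynomial has a root. In characteristic two this is stronger
than asking only for square roots. -/
class IsQuadraticallyClosed (L : Type*) [Field L] : Prop where
  exists_root (b c : L) : ∃ x : L, x ^ 2 + b * x + c = 0

variable {L : Type*} [Field L]

instance [IsAlgClosed L] : IsQuadraticallyClosed L where
  exists_root b c := by
    obtain ⟨x, hx⟩ := IsAlgClosed.exists_root
      (Polynomial.C 1 * Polynomial.X ^ 2 + Polynomial.C b * Polynomial.X + Polynomial.C c)
      ((Polynomial.degree_quadratic one_ne_zero).trans_ne two_ne_zero)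
    exact ⟨x, by simpa using hx⟩

variable [IsQuadraticallyClosed L]

/- On a finite field `x ↦ x² - x` identifies `0` and `1`, hence is not onto. -/
theorem IsQuadraticallyClosed.infinite : Infinite L := by
  refine not_finite_iff_infinite.mp fun _ => ?_
  have surjective : Function.Surjective fun x : L => x ^ 2 - x := fun y => by
    obtain ⟨x, hx⟩ := exists_root (-1) (-y)
    exact ⟨x, by linear_combination hx⟩
  exact zero_ne_one (Finite.injective_iff_surjective.mpr surjective (by simp))

theorem IsQuadraticallyClosed.exists_sq_eq (a : L) : ∃ x : L, x ^ 2 = a := by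
  obtain ⟨x, hx⟩ := exists_root 0 (-a)
  exact ⟨x, by linear_combination hx⟩

theorem IsQuadraticallyClosed.exists_isCoprime_root (a b c : L) :
    ∃ u v : L, IsCoprime u v ∧ a * u ^ 2 + b * u * v + c * v ^ 2 = 0 := by
  by_cases ha : a = 0
  · exact ⟨1, 0, isCoprime_one_left, by simp [ha]⟩
  · obtain ⟨x, hx⟩ := exists_root (b / a) (c / a)
    field_simp at hx
    exact ⟨x, 1, isCoprime_one_right, by linear_combination hx⟩

end QuadraticEquations

section Coordinates

theorem toV8_injective {R : Type*} [CommRing R] :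
    Function.Injective (toV8 : (Fin 7 → R) → _) := by
  intro c c' h
  simp only [toV8, Prod.mk.injEq] at h
  obtain ⟨hF₁, hF₂, hf, hg⟩ := h
  have eval_F₁ (x y : R) : c 0 * x ^ 2 + c 1 * x * y + c 2 * y ^ 2 =
      c' 0 * x ^ 2 + c' 1 * x * y + c' 2 * y ^ 2 := by
    simpa using congrArg (MvPolynomial.eval ![x, y]) hF₁
  have eval_F₂ (x y : R) : c 3 * x + c 4 * y = c' 3 * x + c' 4 * y := by
    simpa using congrArg (MvPolynomial.eval ![x, y]) hF₂
  exact funext fun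
    | 0 => by simpa using eval_F₁ 1 0
    | 1 => by linear_combination eval_F₁ 1 1 - eval_F₁ 1 0 - eval_F₁ 0 1
    | 2 => by simpa using eval_F₁ 0 1
    | 3 => by simpa using eval_F₂ 1 0
    | 4 => by simpa using eval_F₂ 0 1
    | 5 => hf
    | 6 => hg

/-- The group `G₈`, whose elements are written `(A, t₁, t₂, t₃)`. -/
abbrev G8 (L : Type*) [Field L] : Type _ :=
  Matrix.SpecialLinearGroup (Fin 2) L × Lˣ × Lˣ × Lˣ

variable {L : Type*} [Field L]

/-- The coordinates of `act8 g (toV8 c)` with respect to the monomial basis. -/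
def coordAct8 (g : G8 L) (c : Fin 7 → L) : Fin 7 → L :=
  let ⟨A, t₁, t₂, t₃⟩ := g
  ![(t₂ : L)⁻¹ * (c 0 * A 0 0 ^ 2 + c 1 * A 0 0 * A 1 0 + c 2 * A 1 0 ^ 2),
    (t₂ : L)⁻¹ * (2 * c 0 * A 0 0 * A 0 1 + c 1 * (A 0 0 * A 1 1 + A 0 1 * A 1 0)
      + 2 * c 2 * A 1 0 * A 1 1),
    (t₂ : L)⁻¹ * (c 0 * A 0 1 ^ 2 + c 1 * A 0 1 * A 1 1 + c 2 * A 1 1 ^ 2),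
    (t₃ : L)⁻¹ * (c 3 * A 0 0 + c 4 * A 1 0),
    (t₃ : L)⁻¹ * (c 3 * A 0 1 + c 4 * A 1 1),
    (t₁ : L)⁻¹ * c 5,
    (t₁ : L) ^ 2 * (t₂ : L) ^ 3 * (t₃ : L) ^ 2 * c 6]

/- Substitution is contravariant, `(F ∘ A) ∘ B = F ∘ (A * B)`, so `G₈` acts from the right. -/
instance : MulAction (G8 L)ᵐᵒᵖ (Fin 7 → L) where
  smul g c := coordAct8 g.unop c
  one_smul c := by
    change coordAct8 1 c = c
    ext i
    fin_cases i <;> simp [coordAct8]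
  mul_smul g h c := by
    change coordAct8 (h.unop * g.unop) c = coordAct8 g.unop (coordAct8 h.unop c)
    ext i
    fin_cases i <;>
    · simp only [coordAct8, Units.val_mul, mul_inv, Matrix.SpecialLinearGroup.coe_mul,
        Matrix.mul_apply, Fin.sum_univ_two, Fin.zero_eta, Fin.mk_one, Fin.reduceFinMk,
        Matrix.cons_val]
      ring

theorem op_smul_eq_coordAct8 (g : G8 L) (c : Fin 7 → L) : c <• g = coordAct8 g c := rfl

theorem act8_toV8 (g : G8 L) (c : Fin 7 → L) : act8 g (toV8 c) = toV8 (c <• g) := by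
  have C_two : (MvPolynomial.C 2 : MvPolynomial (Fin 2) L) = 2 := map_ofNat _ 2
  simp only [act8, toV8, sub8, op_smul_eq_coordAct8, coordAct8, Prod.mk.injEq]
  refine ⟨?_, ?_, rfl, rfl⟩ <;>
  · simp only [MvPolynomial.smul_eq_C_mul, MvPolynomial.aeval_C, MvPolynomial.aeval_X,
      MvPolynomial.algebraMap_eq, Fin.sum_univ_two, Matrix.cons_val, map_add, map_mul, map_pow,
      C_two]
    ring

theorem stable8_iff_isZariskiStable (c : Fin 7 → L) :
    Stable8 c ↔ IsZariskiStable (G8 L)ᵐᵒᵖ c := by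
  have orbit_eq : {c' | ∃ g : G8 L, toV8 c' = act8 g (toV8 c)} = orbit (G8 L)ᵐᵒᵖ c := by
    ext c'
    simp only [act8_toV8, toV8_injective.eq_iff, mem_orbit_iff, MulOpposite.op_surjective.exists,
      Set.mem_ofPred_eq, eq_comm]
  have stabilizer_eq : {g : G8 L | act8 g (toV8 c) = toV8 c} =
      MulOpposite.op ⁻¹' (stabilizer (G8 L)ᵐᵒᵖ c : Set (G8 L)ᵐᵒᵖ) := by
    ext g
    simp [act8_toV8, toV8_injective.eq_iff]
  rw [Stable8, IsZariskiStable, orbit_eq, stabilizer_eq]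
  exact and_congr_right' ⟨fun h => h.of_preimage MulOpposite.op_surjective,
    fun h => Set.Finite.preimage MulOpposite.op_injective.injOn h⟩

end Coordinates

section Invariants

/-- The resultant of the binary forms `aX² + bXY + cY²` and `dX + eY`. -/
def quadLinResultant {R : Type*} [CommRing R] (a b c d e : R) : R :=
  c * d ^ 2 - b * d * e + a * e ^ 2

/-- The `G₈`-invariant polynomial on `V₈` whose square is `Delta8`. -/
def invariant8 {R : Type*} [CommRing R] (c : Fin 7 → R) : R :=
  c 5 ^ 2 * c 6 * discrim (c 0) (c 1) (c 2) * quadLinResultant (c 0) (c 1) (c 2) (c 3) (c 4)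

theorem Delta8_eq_invariant8_sq {R : Type*} [CommRing R] (c : Fin 7 → R) :
    Delta8 c = invariant8 c ^ 2 := rfl

theorem invariant8_ne_zero_iff {R : Type*} [CommRing R] [IsDomain R] {c : Fin 7 → R} :
    invariant8 c ≠ 0 ↔ c 5 ≠ 0 ∧ c 6 ≠ 0 ∧ discrim (c 0) (c 1) (c 2) ≠ 0 ∧
      quadLinResultant (c 0) (c 1) (c 2) (c 3) (c 4) ≠ 0 := by
  simp [invariant8, and_assoc]

theorem isZariskiClosed_setOf_invariant8_eq {R : Type*} [CommRing R] (y : R) :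
    IsZariskiClosed {x : Fin 7 → R | invariant8 x = y} := by
  convert isZariskiClosed_setOf_eval_eq (invariant8 MvPolynomial.X) y
  simp [invariant8, discrim, quadLinResultant]

variable {L : Type*} [Field L]

theorem discrim_op_smul (g : G8 L) (c : Fin 7 → L) :
    discrim ((c <• g) 0) ((c <• g) 1) ((c <• g) 2) =
      (g.2.2.1 : L)⁻¹ ^ 2 * discrim (c 0) (c 1) (c 2) := by
  obtain ⟨A, t₁, t₂, t₃⟩ := g
  have hA : A 0 0 * A 1 1 - A 0 1 * A 1 0 = 1 := (Matrix.det_fin_two _).symm.trans A.det_coe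
  calc
    _ = (t₂ : L)⁻¹ ^ 2 * ((A 0 0 * A 1 1 - A 0 1 * A 1 0) ^ 2 * discrim (c 0) (c 1) (c 2)) := by
      simp only [op_smul_eq_coordAct8, coordAct8, discrim, Matrix.cons_val]
      ring
    _ = _ := by rw [hA, one_pow, one_mul]

theorem quadLinResultant_op_smul (g : G8 L) (c : Fin 7 → L) :
    quadLinResultant ((c <• g) 0) ((c <• g) 1) ((c <• g) 2) ((c <• g) 3) ((c <• g) 4) =
      (g.2.2.1 : L)⁻¹ * (g.2.2.2 : L)⁻¹ ^ 2 *
        quadLinResultant (c 0) (c 1) (c 2) (c 3) (c 4) := by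
  obtain ⟨A, t₁, t₂, t₃⟩ := g
  have hA : A 0 0 * A 1 1 - A 0 1 * A 1 0 = 1 := (Matrix.det_fin_two _).symm.trans A.det_coe
  calc
    _ = (t₂ : L)⁻¹ * (t₃ : L)⁻¹ ^ 2 * ((A 0 0 * A 1 1 - A 0 1 * A 1 0) ^ 2 *
        quadLinResultant (c 0) (c 1) (c 2) (c 3) (c 4)) := by
      simp only [op_smul_eq_coordAct8, coordAct8, quadLinResultant, Matrix.cons_val]
      ring
    _ = _ := by rw [hA, one_pow, one_mul]

theorem invariant8_op_smul (g : G8 L) (c : Fin 7 → L) : invariant8 (c <• g) = invariant8 c := by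
  rw [invariant8, discrim_op_smul, quadLinResultant_op_smul, invariant8]
  simp only [op_smul_eq_coordAct8, coordAct8, Matrix.cons_val]
  field_simp

end Invariants

section Destabilization

variable {L : Type*} [Field L]

/-- The torus element `(diag (s ^ p, s ^ (-p)), s ^ q₁, s ^ q₂, s ^ q₃)` of `G₈`; as a function of
`s` it is the one-parameter subgroup with exponents `p, q₁, q₂, q₃`. -/
def oneParam8 (p q₁ q₂ q₃ : ℤ) (s : Lˣ) : G8 L :=
  (⟨!![(s : L) ^ p, 0; 0, (s : L) ^ (-p)], by simp [s.ne_zero, zpow_ne_zero]⟩,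
    s ^ q₁, s ^ q₂, s ^ q₃)

/-- The weights of `oneParam8 p q₁ q₂ q₃` on the seven coordinates of `V₈`. -/
def weight8 (p q₁ q₂ q₃ : ℤ) : Fin 7 → ℤ :=
  ![2 * p - q₂, -q₂, -2 * p - q₂, p - q₃, -p - q₃, -q₁, 2 * q₁ + 3 * q₂ + 2 * q₃]

theorem op_smul_oneParam8_apply (p q₁ q₂ q₃ : ℤ) (s : Lˣ) (c : Fin 7 → L) (i : Fin 7) :
    (c <• oneParam8 p q₁ q₂ q₃ s) i = (s : L) ^ weight8 p q₁ q₂ q₃ i * c i := by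
  have hs : (s : L) ≠ 0 := s.ne_zero
  fin_cases i <;>
    simp only [op_smul_eq_coordAct8, coordAct8, oneParam8, weight8, Units.val_zpow_eq_zpow_val,
      Fin.zero_eta, Fin.mk_one, Fin.reduceFinMk, Matrix.of_apply, Matrix.cons_val', Matrix.cons_val,
      zpow_add₀ hs, zpow_sub₀ hs, zpow_neg, neg_mul, zpow_mul', zpow_ofNat] <;>
    field_simp <;>
    ring

theorem IsZariskiStable.exists_weight8_neg [Infinite L] {c : Fin 7 → L}
    (hc : IsZariskiStable (G8 L)ᵐᵒᵖ c) (p q₁ q₂ q₃ : ℤ) (hw : weight8 p q₁ q₂ q₃ ≠ 0) :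
    ∃ i, c i ≠ 0 ∧ weight8 p q₁ q₂ q₃ i < 0 :=
  hc.exists_weight_neg (fun s => .op (oneParam8 p q₁ q₂ q₃ s)) hw
    (op_smul_oneParam8_apply p q₁ q₂ q₃)

theorem IsZariskiStable.apply_five_ne_zero [Infinite L] {c : Fin 7 → L}
    (hc : IsZariskiStable (G8 L)ᵐᵒᵖ c) : c 5 ≠ 0 := by
  intro h
  obtain ⟨i, hi, hneg⟩ := hc.exists_weight8_neg 0 1 0 0 (by decide)
  fin_cases i <;> simp_all [weight8]

theorem IsZariskiStable.apply_six_ne_zero [Infinite L] {c : Fin 7 → L}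
    (hc : IsZariskiStable (G8 L)ᵐᵒᵖ c) : c 6 ≠ 0 := by
  intro h
  obtain ⟨i, hi, hneg⟩ := hc.exists_weight8_neg 0 (-1) 0 0 (by decide)
  fin_cases i <;> simp_all [weight8]

theorem IsZariskiStable.linear_ne_zero [Infinite L] {c : Fin 7 → L}
    (hc : IsZariskiStable (G8 L)ᵐᵒᵖ c) : c 4 ≠ 0 ∨ c 3 ≠ 0 := by
  by_contra! h
  obtain ⟨i, hi, hneg⟩ := hc.exists_weight8_neg 0 0 0 1 (by decide)
  fin_cases i <;> simp_all [weight8]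

theorem exists_op_smul_apply_two_eq_zero [IsQuadraticallyClosed L] (c : Fin 7 → L) :
    ∃ g : G8 L, (c <• g) 2 = 0 := by
  obtain ⟨u, v, huv, hroot⟩ := IsQuadraticallyClosed.exists_isCoprime_root (c 0) (c 1) (c 2)
  obtain ⟨A, rfl, rfl⟩ := huv.exists_SL2_col 1
  exact ⟨(A, 1, 1, 1), by simpa [op_smul_eq_coordAct8, coordAct8] using hroot⟩

theorem IsZariskiStable.discrim_ne_zero [IsQuadraticallyClosed L] {c : Fin 7 → L}
    (hc : IsZariskiStable (G8 L)ᵐᵒᵖ c) : discrim (c 0) (c 1) (c 2) ≠ 0 := by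
  have : Infinite L := IsQuadraticallyClosed.infinite
  intro h
  obtain ⟨g, h2⟩ := exists_op_smul_apply_two_eq_zero c
  have h1 : (c <• g) 1 = 0 := by
    have discrim_eq := discrim_op_smul g c
    rw [h, h2, discrim] at discrim_eq
    simpa using discrim_eq
  obtain ⟨i, hi, hneg⟩ :=
    (hc.of_mem_orbit (mem_orbit c (.op g))).exists_weight8_neg 1 0 2 (-3) (by decide)
  fin_cases i <;> simp_all [weight8]

theorem IsZariskiStable.quadLinResultant_ne_zero [Infinite L] {c : Fin 7 → L}
    (hc : IsZariskiStable (G8 L)ᵐᵒᵖ c) :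
    quadLinResultant (c 0) (c 1) (c 2) (c 3) (c 4) ≠ 0 := by
  intro h
  have hroot : IsCoprime (-c 4) (c 3) :=
    (Semifield.isCoprime_iff.mpr hc.linear_ne_zero).neg_left
  rw [quadLinResultant] at h
  obtain ⟨A, hA₀, hA₁⟩ := hroot.exists_SL2_col 1
  let g : G8 L := (A, 1, 1, 1)
  have h2 : (c <• g) 2 = 0 := by
    simp only [op_smul_eq_coordAct8, coordAct8, g, hA₀, hA₁, Units.val_one, inv_one,
      Matrix.cons_val]
    linear_combination h
  have h4 : (c <• g) 4 = 0 := by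
    simp only [op_smul_eq_coordAct8, coordAct8, g, hA₀, hA₁, Units.val_one, inv_one,
      Matrix.cons_val]
    ring
  obtain ⟨i, hi, hneg⟩ :=
    (hc.of_mem_orbit (mem_orbit c (.op g))).exists_weight8_neg 1 0 0 0 (by decide)
  fin_cases i <;> simp_all [weight8]

end Destabilization

section NormalForm

variable {L : Type*} [Field L]

/-- The vector `(XY, X + Y, 1, y)`. -/
def normalForm8 (y : L) : Fin 7 → L := ![0, 1, 0, 1, 1, 1, y]

theorem invariant8_normalForm8 (y : L) : invariant8 (normalForm8 y) = -y := by
  simp [invariant8, normalForm8, discrim, quadLinResultant]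

/- Now `F₁ = X * (aX + bY)`. The rows of `A` are the components of `σ * F₂` along `X` and along
`aX + bY`, and `σ` is chosen so that `det A = 1`. -/
theorem exists_normalForm8_op_smul_eq [IsQuadraticallyClosed L] {c : Fin 7 → L} (h2 : c 2 = 0)
    (hc : invariant8 c ≠ 0) : ∃ (g : G8 L) (y : L), normalForm8 y <• g = c := by
  obtain ⟨h5, h6, hdiscrim, hresultant⟩ := invariant8_ne_zero_iff.mp hc
  have h1 : c 1 ≠ 0 := by simpa [discrim, h2] using hdiscrim
  have h4 : c 4 ≠ 0 := by
    intro h4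
    simp [quadLinResultant, h2, h4] at hresultant
  have h34 : c 1 * c 3 - c 0 * c 4 ≠ 0 := by
    intro h
    refine hresultant ?_
    rw [quadLinResultant, h2]
    linear_combination -c 4 * h
  obtain ⟨σ, hσ⟩ := IsQuadraticallyClosed.exists_sq_eq
    (c 1 / ((c 1 * c 3 - c 0 * c 4) * c 4))
  rw [eq_div_iff (mul_ne_zero h34 h4)] at hσ
  have hσ0 : σ ≠ 0 := by
    rintro rfl
    exact h1 (by simpa using hσ.symm)
  let A : Matrix.SpecialLinearGroup (Fin 2) L :=
    ⟨!![σ * (c 1 * c 3 - c 0 * c 4) / c 1, 0; σ * c 0 * c 4 / c 1, σ * c 4], by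
      rw [Matrix.det_fin_two_of]
      field_simp
      linear_combination hσ⟩
  refine ⟨(A, (Units.mk0 _ h5)⁻¹, (Units.mk0 _ h1)⁻¹, Units.mk0 σ hσ0),
    c 6 * c 5 ^ 2 * c 1 ^ 3 / σ ^ 2, ?_⟩
  ext i
  fin_cases i <;>
    simp only [op_smul_eq_coordAct8, coordAct8, normalForm8, A, h2, Units.val_inv_eq_inv_val,
      Units.val_mk0, Fin.zero_eta, Fin.mk_one, Fin.reduceFinMk, Matrix.of_apply, Matrix.cons_val',
      Matrix.cons_val] <;>
    field_simp
  · linear_combination c 0 * hσ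
  · linear_combination hσ
  all_goals ring

theorem mem_orbit_normalForm8 [IsQuadraticallyClosed L] {c : Fin 7 → L} (hc : invariant8 c ≠ 0) :
    c ∈ orbit (G8 L)ᵐᵒᵖ (normalForm8 (-invariant8 c)) := by
  obtain ⟨g, h2⟩ := exists_op_smul_apply_two_eq_zero c
  obtain ⟨h, y, hy⟩ := exists_normalForm8_op_smul_eq h2 (by rwa [invariant8_op_smul])
  have invariant_eq : invariant8 c = -y := by
    rw [← invariant8_op_smul g, ← hy, invariant8_op_smul, invariant8_normalForm8]
  rw [invariant_eq, neg_neg, ← orbit_eq_iff, ← orbit_smul (.op g) c]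
  exact orbit_eq_iff.mpr ⟨.op h, hy⟩

theorem orbit_eq_setOf_invariant8_eq [IsQuadraticallyClosed L] {c : Fin 7 → L}
    (hc : invariant8 c ≠ 0) :
    orbit (G8 L)ᵐᵒᵖ c = {x | invariant8 x = invariant8 c} := by
  ext x
  constructor
  · rintro ⟨g, rfl⟩
    exact invariant8_op_smul g.unop c
  · intro (hx : invariant8 x = invariant8 c)
    rw [orbit_eq_iff.mpr (mem_orbit_normalForm8 hc), ← hx]
    exact mem_orbit_normalForm8 (hx ▸ hc)

theorem apply_eq_of_normalForm8_op_smul_eq_self {y : L} {A : Matrix.SpecialLinearGroup (Fin 2) L}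
    {t₁ t₂ t₃ : Lˣ} (h : normalForm8 y <• ((A, t₁, t₂, t₃) : G8 L) = normalForm8 y) :
    A 0 0 * A 0 1 = 0 ∧ A 1 0 = A 0 1 ∧ A 1 1 = A 0 0 ∧
      (t₁ : L) = 1 ∧ (t₂ : L) = A 0 0 ^ 2 + A 0 1 ^ 2 ∧ (t₃ : L) = A 0 0 + A 0 1 := by
  have hA : A 0 0 * A 1 1 - A 0 1 * A 1 0 = 1 := (Matrix.det_fin_two _).symm.trans A.det_coe
  have coord (i : Fin 7) := congrFun h i
  simp only [op_smul_eq_coordAct8, coordAct8, normalForm8] at coord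
  have hX : A 0 0 * A 1 0 = 0 := by simpa using coord 0
  have hXY : A 0 0 * A 1 1 + A 0 1 * A 1 0 = t₂ := by
    simpa [inv_mul_eq_iff_eq_mul₀] using coord 1
  have hY : A 0 1 * A 1 1 = 0 := by simpa using coord 2
  have hX₁ : A 0 0 + A 1 0 = t₃ := by simpa [inv_mul_eq_iff_eq_mul₀] using coord 3
  have hY₁ : A 0 1 + A 1 1 = t₃ := by simpa [inv_mul_eq_iff_eq_mul₀] using coord 4
  have ht₁ : (t₁ : L) = 1 := by simpa using coord 5
  have h10 : A 1 0 = A 0 1 := by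
    linear_combination (A 0 1 - A 1 0) * hA + A 1 1 * hX - A 0 0 * hY + A 0 1 * hX - A 1 0 * hY
      - A 0 1 * A 1 0 * (hX₁ - hY₁)
  have h11 : A 1 1 = A 0 0 := by linear_combination hY₁ - hX₁ + h10
  rw [h10] at hX hXY hX₁
  rw [h11] at hXY
  exact ⟨hX, h10, h11, ht₁, by linear_combination -hXY, hX₁.symm⟩

theorem finite_stabilizer_normalForm8 (y : L) :
    Finite (stabilizer (G8 L)ᵐᵒᵖ (normalForm8 y)) := by
  classical
  let firstRow : (G8 L)ᵐᵒᵖ → L × L := fun g => (g.unop.1 0 0, g.unop.1 0 1)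
  let rows : Finset (L × L) := {0, 1, -1} ×ˢ insert 0 (Polynomial.nthRootsFinset 2 (-1 : L))
  refine Set.Finite.of_finite_image (f := firstRow) (rows.finite_toSet.subset ?_) ?_
  · rintro _ ⟨g, h, rfl⟩
    obtain ⟨⟨A, t₁, t₂, t₃⟩, rfl⟩ := MulOpposite.op_surjective g
    obtain ⟨hmul, h10, h11, -⟩ := apply_eq_of_normalForm8_op_smul_eq_self h
    have hdet : A 0 0 ^ 2 - A 0 1 ^ 2 = 1 := by
      have hA : A 0 0 * A 1 1 - A 0 1 * A 1 0 = 1 := (Matrix.det_fin_two _).symm.trans A.det_coe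
      rwa [h10, h11, ← sq, ← sq] at hA
    rcases mul_eq_zero.mp hmul with h0 | h0
    · have : A 0 1 ^ 2 = -1 := by simpa [h0, neg_eq_iff_eq_neg] using hdet
      simp [rows, firstRow, h0, this]
    · have : A 0 0 = 1 ∨ A 0 0 = -1 := by simpa [h0] using hdet
      simp [rows, firstRow, h0, this]
  · rintro ⟨A, t₁, t₂, t₃⟩ hg ⟨B, s₁, s₂, s₃⟩ hh hrow
    obtain ⟨-, hA₁₀, hA₁₁, ht₁, ht₂, ht₃⟩ := apply_eq_of_normalForm8_op_smul_eq_self hg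
    obtain ⟨-, hB₁₀, hB₁₁, hs₁, hs₂, hs₃⟩ := apply_eq_of_normalForm8_op_smul_eq_self hh
    obtain ⟨h00, h01⟩ : A 0 0 = B 0 0 ∧ A 0 1 = B 0 1 := Prod.mk.inj hrow
    have hAB : A = B := by
      ext i j
      fin_cases i <;> fin_cases j <;> simp_all
    subst hAB
    congr 4 <;> ext <;> simp_all

theorem isZariskiStable_of_invariant8_ne_zero [IsQuadraticallyClosed L] {c : Fin 7 → L}
    (hc : invariant8 c ≠ 0) : IsZariskiStable (G8 L)ᵐᵒᵖ c := by
  let c₀ := normalForm8 (-invariant8 c)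
  have : IsZariskiStable (G8 L)ᵐᵒᵖ c₀ := by
    have := finite_stabilizer_normalForm8 (-invariant8 c)
    refine ⟨?_, this⟩
    rw [orbit_eq_setOf_invariant8_eq (by simpa [c₀, invariant8_normalForm8] using hc)]
    exact isZariskiClosed_setOf_invariant8_eq _
  exact this.of_mem_orbit (mem_orbit_normalForm8 hc)

end NormalForm

theorem stable8_iff_Delta8_ne_zero_general {L : Type*} [Field L] [IsQuadraticallyClosed L]
    (c : Fin 7 → L) : Stable8 c ↔ Delta8 c ≠ 0 := by
  have : Infinite L := IsQuadraticallyClosed.infinite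
  rw [stable8_iff_isZariskiStable, Delta8_eq_invariant8_sq, pow_ne_zero_iff two_ne_zero]
  exact ⟨fun hc => invariant8_ne_zero_iff.mpr ⟨hc.apply_five_ne_zero, hc.apply_six_ne_zero,
    hc.discrim_ne_zero, hc.quadLinResultant_ne_zero⟩, isZariskiStable_of_invariant8_ne_zero⟩

/-
STATEMENT 18 (Theorem 6.3): a vector v ∈ V₈ is stable for the action of
G₈ = SL₂(L) × Lˣ × Lˣ × Lˣ if and only if Δ₈(v) ≠ 0.
-/
theorem stable8_iff_Delta8_ne_zero
    {L : Type*} [Field L] [IsAlgClosed L] (c : Fin 7 → L) :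
    Stable8 c ↔ Delta8 c ≠ 0 :=
  stable8_iff_Delta8_ne_zero_general c
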